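/- Let T be a tournament and let C be a directed cycle in T of length m ≥ 7. Then there exists a directed cycle C′ of length m − 1 with V(C′) ⊆ V(C) such that the unique remaining vertex u ∈ V(C) ∖ V(C′) satisfies d⁺(u, C) ≤ m − 4, where d⁺(u, C) is the number of out-neighbours of u among the vertices of C. -/

import Mathlib

open Set

/-- `T` is a tournament: irreflexive, and for distinct vertices exactly one
of the two possible arcs is present. -/
def IsTournament {V : Type*} (T : V → V → Prop) : Prop :=
  (∀ x, ¬ T x x) ∧ ∀ x y, x ≠ y → (T x y ↔ ¬ T y x)

/-- `c` is a directed cycle of length `q` in the digraph `T`. -/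
def IsCycle {V : Type*} (T : V → V → Prop) (q : ℕ) (c : ZMod q → V) : Prop :=
  Function.Injective c ∧ ∀ i, T (c i) (c (i + 1))

/-- The cycles in the family `C` are pairwise vertex-disjoint. -/
def DisjointCycles {V : Type*} {k q : ℕ} (C : Fin k → ZMod q → V) : Prop :=
  ∀ j j' : Fin k, j ≠ j' → Disjoint (Set.range (C j)) (Set.range (C j'))

/-- `T` contains `k` pairwise vertex-disjoint directed cycles of length `q`. -/
def HasDisjointCycles {V : Type*} (T : V → V → Prop) (k q : ℕ) : Prop :=
  ∃ C : Fin k → ZMod q → V, (∀ j, IsCycle T q (C j)) ∧ DisjointCycles C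

/-- The out-degree of a vertex `v`. -/
noncomputable def outDeg {V : Type*} (T : V → V → Prop) (v : V) : ℕ :=
  {w | T v w}.ncard

/-- `d⁺(v, Y)`: the number of out-neighbours of `v` inside the set `Y`. -/
noncomputable def outDegTo {V : Type*} (T : V → V → Prop) (v : V) (Y : Set V) : ℕ :=
  {w ∈ Y | T v w}.ncard

/-- `d⁺(X, v)`: the number of in-neighbours of `v` inside the set `X`. -/
noncomputable def inDegFrom {V : Type*} (T : V → V → Prop) (X : Set V) (v : V) : ℕ :=
  {x ∈ X | T x v}.ncard

/-- `d⁺(X, Y)`: the number of arcs from `X` to `Y`. -/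
noncomputable def arcs {V : Type*} (T : V → V → Prop) (X Y : Set V) : ℕ :=
  {p : V × V | p.1 ∈ X ∧ p.2 ∈ Y ∧ T p.1 p.2}.ncard

/-- There is an `r`-matching from `X` to `Y`: `r` arcs from `X` to `Y` that
pairwise share no endpoints. -/
def HasMatching {V : Type*} (T : V → V → Prop) (X Y : Set V) (r : ℕ) : Prop :=
  ∃ e : Fin r → V × V,
    (∀ i, (e i).1 ∈ X ∧ (e i).2 ∈ Y ∧ T (e i).1 (e i).2) ∧
    ∀ i j, i ≠ j → (e i).1 ≠ (e j).1 ∧ (e i).2 ≠ (e j).2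

/-- `u` is a Hamiltonian path of the subtournament induced on `S`, written as
`P = (u_{l} … u₂ u₁)`: the vertex `u ⟨0,_⟩` is `u₁`, and each arc goes from the
higher-indexed vertex to the next lower-indexed one. -/
def IsHamPathOn {V : Type*} (T : V → V → Prop) (S : Set V) {l : ℕ}
    (u : Fin l → V) : Prop :=
  Function.Injective u ∧ Set.range u = S ∧
    ∀ (i : ℕ) (h : i + 1 < l), T (u ⟨i + 1, h⟩) (u ⟨i, Nat.lt_of_succ_lt h⟩)

/-
A cycle spans a strong tournament on `m` vertices, and every strong tournament is Hamiltonian, so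
it suffices to find a vertex `u` of in-degree at least `⌊m / 2⌋` whose deletion leaves the
tournament strong.

If deleting `v` destroys strong connectivity, then all arcs entering some nonempty set `X` come
from `v`, so `X` dominates every vertex outside `X ∪ {v}`.

Suppose `X` has at least `⌊m / 2⌋` elements. Some `w` outside `X` has an arc to `v`, and
`X ∪ {v, w}` is strong. If it is not everything, a maximal strong proper subset containing it
misses either a single vertex, which can be deleted and is dominated by `X`, or the two ends of a
detour, in which case averaging provides `u`. If it is everything, then `v` is the only
out-neighbour of `w`; now `w` has large in-degree and the argument applies to `w` instead of `v`,
but three consecutive steps of this kind would close up into a triangle.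

If `X` is smaller, its vertices have in-degree less than `⌊m / 2⌋`. Averaging provides two vertices
of in-degree at least `⌊m / 2⌋`. If both had such small sets, these would be nested, and the arcs
entering the smaller one would force the two vertices to coincide.
-/

section Tournament

variable {V : Type*} {T : V → V → Prop} {S : Set V} {x y z : V}

theorem IsTournament.ne (hT : IsTournament T) (h : T x y) : x ≠ y := by
  rintro rfl
  exact hT.1 x h

theorem IsTournament.asymm (hT : IsTournament T) (h : T x y) : ¬T y x :=
  (hT.2 x y (hT.ne h)).1 h

theorem IsTournament.arc_of_not_arc (hT : IsTournament T) (hxy : x ≠ y) (h : ¬T y x) : T x y :=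
  (hT.2 x y hxy).2 h

theorem IsTournament.arc_or_arc (hT : IsTournament T) (hxy : x ≠ y) : T x y ∨ T y x :=
  or_iff_not_imp_right.2 (hT.arc_of_not_arc hxy)

theorem IsTournament.inDegFrom_add_outDegTo (hT : IsTournament T) (hS : S.Finite) (hz : z ∈ S) :
    inDegFrom T S z + outDegTo T z S + 1 = S.ncard := by
  have hdisj : Disjoint {x ∈ S | T x z} {x ∈ S | T z x} :=
    disjoint_left.2 fun x hx hx' => hT.asymm hx.2 hx'.2
  have hunion : {x ∈ S | T x z} ∪ {x ∈ S | T z x} = S \ {z} := by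
    ext x
    refine ⟨?_, fun hx => (hT.arc_or_arc hx.2).imp (⟨hx.1, ·⟩) (⟨hx.1, ·⟩)⟩
    rintro (hx | hx)
    exacts [⟨hx.1, hT.ne hx.2⟩, ⟨hx.1, (hT.ne hx.2).symm⟩]
  rw [inDegFrom, outDegTo, ← ncard_union_eq hdisj (hS.sep _) (hS.sep _), hunion,
    ncard_sdiff_singleton_add_one hz hS]

theorem sum_inDegFrom_eq_sum_outDegTo (T : V → V → Prop) (F : Finset V) :
    ∑ z ∈ F, inDegFrom T F z = ∑ z ∈ F, outDegTo T z F := by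
  classical
  have hin (z : V) : inDegFrom T F z = (F.bipartiteBelow T z).card := by
    rw [inDegFrom, ← ncard_coe_finset, Finset.coe_bipartiteBelow]
    rfl
  have hout (z : V) : outDegTo T z F = (F.bipartiteAbove T z).card := by
    rw [outDegTo, ← ncard_coe_finset, Finset.coe_bipartiteAbove]
    rfl
  simp only [hin, hout, Finset.sum_card_bipartiteAbove_eq_sum_card_bipartiteBelow]

/-- Otherwise the out-degree would exceed the in-degree at every vertex other than `v`, so `v`
would have to absorb the whole difference and be a sink. -/
theorem IsTournament.exists_ne_le_inDegFrom (hT : IsTournament T) (hS : S.Finite) {k : ℕ}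
    (hk : 2 * k ≤ S.ncard) {v : V} (hv : v ∈ S) (hout : 0 < outDegTo T v S) :
    ∃ z ∈ S, z ≠ v ∧ k ≤ inDegFrom T S z := by
  classical
  by_contra! hlow
  have hdeg := hT.inDegFrom_add_outDegTo hS hv
  lift S to Finset V using hS
  have hsum := sum_inDegFrom_eq_sum_outDegTo T S
  rw [← Finset.add_sum_erase S _ hv, ← Finset.add_sum_erase S _ hv] at hsum
  have hlt : ∑ z ∈ S.erase v, (inDegFrom T S z + 1) ≤ ∑ z ∈ S.erase v, outDegTo T z S := by
    refine Finset.sum_le_sum fun z hz => ?_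
    obtain ⟨hzv, hzS⟩ := Finset.mem_erase.1 hz
    have := hT.inDegFrom_add_outDegTo S.finite_toSet hzS
    have := hlow z hzS hzv
    omega
  rw [Finset.sum_add_distrib, Finset.sum_const, smul_eq_mul, mul_one,
    Finset.card_erase_of_mem hv] at hlt
  rw [ncard_coe_finset] at hdeg
  omega

theorem IsTournament.exists_le_inDegFrom (hT : IsTournament T) (hS : S.Finite) (hne : S.Nonempty)
    {k : ℕ} (hk : 2 * k ≤ S.ncard) : ∃ z ∈ S, k ≤ inDegFrom T S z := by
  obtain ⟨v, hv⟩ := hne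
  rcases Nat.eq_zero_or_pos (outDegTo T v S) with hout | hout
  · have := hT.inDegFrom_add_outDegTo hS hv
    exact ⟨v, hv, by omega⟩
  · obtain ⟨z, hz, -, hzk⟩ := hT.exists_ne_le_inDegFrom hS hk hv hout
    exact ⟨z, hz, hzk⟩

end Tournament

section Strong

variable {V : Type*} {T : V → V → Prop} {S M R : Set V} {a b o i y : V}

/-- The digraph induced by `T` on `S` is strongly connected, in cut form: the only nonempty
subset of `S` that no arc of `S` leaves is `S` itself. The empty set and singletons qualify. -/
def IsStrongOn (T : V → V → Prop) (S : Set V) : Prop :=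
  ∀ A ⊆ S, A.Nonempty → (∀ a ∈ A, ∀ b ∈ S, T a b → b ∈ A) → A = S

/-- The arc `o → i` is a detour around `R`: every vertex of `R` has an arc to `o` and an arc from
`i`. This is how a strong set grows when no single vertex can be added to it. -/
def IsDetour (T : V → V → Prop) (R : Set V) (o i : V) : Prop :=
  T o i ∧ ∀ r ∈ R, T r o ∧ T i r

theorem IsStrongOn.exists_arc (hM : IsStrongOn T M) (hS : S ⊂ M) (hne : S.Nonempty) :
    ∃ a ∈ S, ∃ b ∈ M \ S, T a b := by
  by_contra! h
  exact hS.ne <| hM S hS.subset hne fun a ha b hb hab =>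
    by_contra fun hbS => h a ha b ⟨hb, hbS⟩ hab

theorem IsStrongOn.insert_of_arc_of_arc (hS : IsStrongOn T S) (ha : a ∈ S) (hay : T a y)
    (hb : b ∈ S) (hyb : T y b) : IsStrongOn T (insert y S) := by
  intro A hA hne hclosed
  have hmeet : (A ∩ S).Nonempty := by
    obtain ⟨p, hp⟩ := hne
    rcases hA hp with rfl | hpS
    · exact ⟨b, hclosed p hp b (mem_insert_of_mem p hb) hyb, hb⟩
    · exact ⟨p, hp, hpS⟩
  have hSA : S ⊆ A := inter_eq_right.1 <| hS (A ∩ S) inter_subset_right hmeet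
    fun p hp q hq hpq => ⟨hclosed p hp.1 q (mem_insert_of_mem y hq) hpq, hq⟩
  exact hA.antisymm (insert_subset (hclosed a (hSA ha) y (mem_insert y S) hay) hSA)

theorem IsDetour.isStrongOn (h : IsDetour T R o i) (hR : R.Nonempty) :
    IsStrongOn T (insert i (insert o R)) := by
  intro A hA hne hclosed
  have hoS : o ∈ insert i (insert o R) := mem_insert_of_mem i (mem_insert o R)
  have hRS : R ⊆ insert i (insert o R) :=
    (subset_insert o R).trans (subset_insert i _)
  have ho_of_mem {r : V} (hr : r ∈ R) (hrA : r ∈ A) : o ∈ A := hclosed r hrA o hoS (h.2 r hr).1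
  have ho : o ∈ A := by
    obtain ⟨p, hp⟩ := hne
    rcases hA hp with rfl | rfl | hpR
    · obtain ⟨r, hr⟩ := hR
      exact ho_of_mem hr (hclosed p hp r (hRS hr) (h.2 r hr).2)
    · exact hp
    · exact ho_of_mem hpR hp
  have hi : i ∈ A := hclosed o ho i (mem_insert i _) h.1
  have hRA : R ⊆ A := fun r hr => hclosed i hi r (hRS hr) (h.2 r hr).2
  exact hA.antisymm (insert_subset hi (insert_subset ho hRA))

/-- If no single vertex has arcs both from and to `S`, then every out-neighbour of `S` is
dominated by `S`, and some arc leads from these out-neighbours back to a vertex dominating `S`. -/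
theorem IsStrongOn.exists_ear_or_exists_isDetour (hT : IsTournament T) (hM : IsStrongOn T M)
    (hS : S ⊂ M) (hne : S.Nonempty) :
    (∃ y ∈ M \ S, (∃ a ∈ S, T a y) ∧ ∃ b ∈ S, T y b) ∨
      ∃ o ∈ M \ S, ∃ i ∈ M \ S, IsDetour T S o i := by
  refine or_iff_not_imp_left.2 fun hear => ?_
  push Not at hear
  let O : Set V := {y ∈ M \ S | ∃ a ∈ S, T a y}
  have hO : O.Nonempty := by
    obtain ⟨a, ha, y, hy, hay⟩ := hM.exists_arc hS hne
    exact ⟨y, hy, a, ha, hay⟩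
  have hOM : O ⊂ M := by
    obtain ⟨s, hs⟩ := hne
    exact ssubset_iff_exists.2 ⟨fun y hy => hy.1.1, s, hS.subset hs, fun hsO => hsO.1.2 hs⟩
  obtain ⟨o, ho, i, ⟨hiM, hiO⟩, hoi⟩ := hM.exists_arc hOM hO
  have hi : i ∈ M \ S := ⟨hiM, fun hiS => hear o ho.1 ho.2 i hiS hoi⟩
  refine ⟨o, ho.1, i, hi, hoi, fun s hs => ⟨?_, ?_⟩⟩
  · exact hT.arc_of_not_arc (fun e => ho.1.2 (e ▸ hs)) (hear o ho.1 ho.2 s hs)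
  · exact hT.arc_of_not_arc (fun e => hi.2 (e ▸ hs)) fun hsi => hiO ⟨hi, s, hs, hsi⟩

theorem IsStrongOn.exists_sdiff_singleton_or_exists_isDetour (hT : IsTournament T)
    (hM : IsStrongOn T M) (hfin : M.Finite) (hS : IsStrongOn T S) (hSM : S ⊂ M)
    (hne : S.Nonempty) :
    (∃ y ∈ M \ S, IsStrongOn T (M \ {y})) ∨
      ∃ R o i, IsDetour T R o i ∧ insert i (insert o R) = M := by
  obtain ⟨R, hSR, hR⟩ := (hfin.finite_subsets.subset fun _ h => h.1.subset :
    {R | R ⊂ M ∧ IsStrongOn T R}.Finite).exists_le_maximal ⟨hSM, hS⟩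
  obtain ⟨hRM, hRstrong⟩ := hR.prop
  have hRne : R.Nonempty := hne.mono hSR
  have eq_of_strong {R' : Set V} (hlt : R ⊂ R') (hle : R' ⊆ M) (h : IsStrongOn T R') : R' = M :=
    by_contra fun hR' => hR.not_gt ⟨hle.ssubset_of_ne hR', h⟩ hlt
  rcases hM.exists_ear_or_exists_isDetour hT hRM hRne with
    ⟨y, hy, ⟨a, ha, hay⟩, b, hb, hyb⟩ | ⟨o, ho, i, hi, h⟩
  · have hyR : insert y R = M := eq_of_strong (ssubset_insert hy.2)
      (insert_subset hy.1 hRM.subset) (hRstrong.insert_of_arc_of_arc ha hay hb hyb)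
    refine .inl ⟨y, ⟨hy.1, fun hyS => hy.2 (hSR hyS)⟩, ?_⟩
    rwa [← hyR, insert_sdiff_self_of_notMem hy.2]
  · refine .inr ⟨R, o, i, h, eq_of_strong ?_ ?_ (h.isStrongOn hRne)⟩
    · exact (ssubset_insert ho.2).trans_subset (subset_insert i _)
    · exact insert_subset hi.1 (insert_subset ho.1 hRM.subset)

end Strong

section Deletion

variable {V : Type*} {T : V → V → Prop} {M X X' : Set V} {k : ℕ} {v v' w x y : V}

/-- `X` is a nonempty set of vertices of `M` other than `v`, and `v` is the gate through which
every arc of `M` entering `X` must come. This is what obstructs the deletion of `v`. -/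
structure IsGate (T : V → V → Prop) (M X : Set V) (v : V) : Prop where
  subset : X ⊆ M
  nonempty : X.Nonempty
  notMem : v ∉ X
  eq_of_arc : ∀ a ∈ M, a ∉ X → ∀ x ∈ X, T a x → a = v

/-- `v` is the only out-neighbour of `y` inside `M`. Such a `y` has nearly maximal in-degree and
replaces `v` as a candidate for deletion. Membership in `M` is not part of the notion. -/
def IsSoleOut (T : V → V → Prop) (M : Set V) (y v : V) : Prop :=
  T y v ∧ ∀ z ∈ M, T y z → z = v

theorem exists_isGate_of_not_isStrongOn (h : ¬IsStrongOn T (M \ {v})) :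
    ∃ X, IsGate T M X v ∧ ∃ y ∈ M, y ≠ v ∧ y ∉ X := by
  unfold IsStrongOn at h
  push Not at h
  obtain ⟨A, hA, ⟨y, hy⟩, hclosed, hne⟩ := h
  refine ⟨(M \ {v}) \ A, ⟨sdiff_subset.trans sdiff_subset, ?_, fun hv => hv.1.2 rfl, ?_⟩,
    y, (hA hy).1, (hA hy).2, fun hyX => hyX.2 hy⟩
  · exact sdiff_nonempty.2 fun hle => hne (hA.antisymm hle)
  · intro a ha haX x hx hax
    by_contra hav
    have haA : a ∈ A := by_contra fun haA => haX ⟨⟨ha, hav⟩, haA⟩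
    exact hx.2 (hclosed a haA x hx.1 hax)

namespace IsGate

theorem exists_arc_gate (hX : IsGate T M X v) (hM : IsStrongOn T M) (hv : v ∈ M) :
    ∃ x ∈ X, T v x := by
  have hcompl : M \ X ⊂ M := sdiff_ssubset_left_iff.2 <| by
    rw [inter_eq_right.2 hX.subset]
    exact hX.nonempty
  obtain ⟨a, ha, x, hx, hax⟩ := hM.exists_arc hcompl ⟨v, hv, hX.notMem⟩
  have hxX : x ∈ X := by_contra fun hxX => hx.2 ⟨hx.1, hxX⟩
  exact ⟨x, hxX, hX.eq_of_arc a ha.1 ha.2 x hxX hax ▸ hax⟩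

theorem arc_of_notMem (hX : IsGate T M X v) (hT : IsTournament T) (hx : x ∈ X) (hy : y ∈ M)
    (hyX : y ∉ X) (hyv : y ≠ v) : T x y :=
  hT.arc_of_not_arc (fun e => hyX (e ▸ hx)) fun hyx => hyv (hX.eq_of_arc y hy hyX x hx hyx)

theorem inDegFrom_le_ncard (hX : IsGate T M X v) (hT : IsTournament T) (hfin : M.Finite)
    (hx : x ∈ X) : inDegFrom T M x ≤ X.ncard := by
  have hXfin : X.Finite := hfin.subset hX.subset
  have hsub : {a ∈ M | T a x} ⊆ insert v (X \ {x}) := by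
    rintro a ⟨haM, hax⟩
    by_cases haX : a ∈ X
    · exact .inr ⟨haX, hT.ne hax⟩
    · exact .inl (hX.eq_of_arc a haM haX x hx hax)
  calc inDegFrom T M x ≤ (insert v (X \ {x})).ncard :=
        ncard_le_ncard hsub ((hXfin.sdiff).insert v)
    _ ≤ (X \ {x}).ncard + 1 := ncard_insert_le _ _
    _ = X.ncard := ncard_sdiff_singleton_add_one hx hXfin

theorem ncard_le_inDegFrom (hX : IsGate T M X v) (hT : IsTournament T) (hfin : M.Finite)
    (hy : y ∈ M) (hyX : y ∉ X) (hyv : y ≠ v) : X.ncard ≤ inDegFrom T M y :=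
  ncard_le_ncard (fun _ hx => ⟨hX.subset hx, hX.arc_of_notMem hT hx hy hyX hyv⟩) (hfin.sep _)

theorem exists_arc_to_gate (hX : IsGate T M X v) (hM : IsStrongOn T M) (hv : v ∈ M) (hy : y ∈ M)
    (hyX : y ∉ X) (hyv : y ≠ v) : ∃ w ∈ M, w ∉ X ∧ T w v := by
  have hY : M \ insert v X ⊂ M :=
    ssubset_iff_exists.2 ⟨sdiff_subset, v, hv, fun h => h.2 (mem_insert v X)⟩
  obtain ⟨w, ⟨hwM, hw⟩, b, ⟨hbM, hb⟩, hwb⟩ :=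
    hM.exists_arc hY ⟨y, hy, fun h => h.elim hyv hyX⟩
  rw [mem_insert_iff, not_or] at hw
  rcases not_not.1 fun h => hb ⟨hbM, h⟩ with rfl | hbX
  · exact ⟨w, hwM, hw.2, hwb⟩
  · exact absurd (hX.eq_of_arc w hwM hw.2 b hbX hwb) hw.1

theorem subset_of_closed (hX : IsGate T M X v) (hM : IsStrongOn T M) {A : Set V} (hAM : A ⊆ M)
    (hvA : v ∈ A) (hclosed : ∀ a ∈ A, ∀ x ∈ X, T a x → x ∈ A) : X ⊆ A := by
  have hall : A ∪ M \ insert v X = M := by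
    refine hM _ (union_subset hAM sdiff_subset) ⟨v, .inl hvA⟩ fun p hp q hq hpq => ?_
    by_cases hqX : q ∈ X
    · rcases hp with hpA | ⟨hpM, hp⟩
      · exact .inl (hclosed p hpA q hqX hpq)
      · rw [mem_insert_iff, not_or] at hp
        exact absurd (hX.eq_of_arc p hpM hp.2 q hqX hpq) hp.1
    · by_cases hqv : q = v
      · exact .inl (hqv ▸ hvA)
      · exact .inr ⟨hq, fun h => h.elim hqv hqX⟩
  intro x hx
  exact (hall.superset (hX.subset hx)).resolve_right fun h => h.2 (mem_insert_of_mem v hx)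

theorem isStrongOn_insert_insert (hX : IsGate T M X v) (hT : IsTournament T)
    (hM : IsStrongOn T M) (hv : v ∈ M) (hw : w ∈ M) (hwX : w ∉ X) (hwv : T w v) :
    IsStrongOn T (insert w (insert v X)) := by
  intro A hA hne hclosed
  have hvS : v ∈ insert w (insert v X) := mem_insert_of_mem w (mem_insert v X)
  have hXS : X ⊆ insert w (insert v X) := (subset_insert v X).trans (subset_insert w _)
  have hxw {x : V} (hx : x ∈ X) : T x w := hX.arc_of_notMem hT hx hw hwX (hT.ne hwv)
  have hw_of_mem {x : V} (hx : x ∈ X) (hxA : x ∈ A) : w ∈ A :=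
    hclosed x hxA w (mem_insert w _) (hxw hx)
  have hvA : v ∈ A := by
    obtain ⟨p, hp⟩ := hne
    rcases hA hp with rfl | rfl | hpX
    · exact hclosed p hp v hvS hwv
    · exact hp
    · exact hclosed w (hw_of_mem hpX hp) v hvS hwv
  have hAM : A ⊆ M := hA.trans (insert_subset hw (insert_subset hv hX.subset))
  have hXA : X ⊆ A := hX.subset_of_closed hM hAM hvA fun p hp x hx => hclosed p hp x (hXS hx)
  obtain ⟨x, hx⟩ := hX.nonempty
  exact hA.antisymm (insert_subset (hw_of_mem hx (hXA hx)) (insert_subset hvA hXA))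

theorem subset_or_subset (hX : IsGate T M X v) (hX' : IsGate T M X' v') (hT : IsTournament T)
    (hv : v ∉ X') (hv' : v' ∉ X) : X ⊆ X' ∨ X' ⊆ X := by
  by_contra! h
  obtain ⟨p, hp, hpX'⟩ := not_subset.1 h.1
  obtain ⟨q, hq, hqX⟩ := not_subset.1 h.2
  rcases hT.arc_or_arc (fun e => hpX' (e ▸ hq) : p ≠ q) with hpq | hqp
  · exact hv' (hX'.eq_of_arc p (hX.subset hp) hpX' q hq hpq ▸ hp)
  · exact hv (hX.eq_of_arc q (hX'.subset hq) hqX p hp hqp ▸ hq)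

theorem gate_eq_of_subset (hX : IsGate T M X v) (hX' : IsGate T M X' v') (hM : IsStrongOn T M)
    (hvM : v ∈ M) (hv : v ∉ X') (hle : X ⊆ X') : v = v' := by
  obtain ⟨x, hx, hvx⟩ := hX.exists_arc_gate hM hvM
  exact hX'.eq_of_arc v hvM hv x (hle hx) hvx

theorem gate_eq (hX : IsGate T M X v) (hX' : IsGate T M X' v') (hT : IsTournament T)
    (hM : IsStrongOn T M) (hvM : v ∈ M) (hvM' : v' ∈ M) (hv : v ∉ X') (hv' : v' ∉ X) : v = v' :=
  (hX.subset_or_subset hX' hT hv hv').elim (hX.gate_eq_of_subset hX' hM hvM hv)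
    fun hle => (hX'.gate_eq_of_subset hX hM hvM' hv' hle).symm

end IsGate

theorem IsSoleOut.ncard_le_inDegFrom_add_two (h : IsSoleOut T M y v) (hT : IsTournament T)
    (hfin : M.Finite) (hy : y ∈ M) : M.ncard ≤ inDegFrom T M y + 2 := by
  have hout : outDegTo T y M ≤ 1 := by
    rw [outDegTo, ← ncard_singleton v]
    exact ncard_le_ncard fun z hz => h.2 z hz.1 hz.2
  have := hT.inDegFrom_add_outDegTo hfin hy
  omega

/-- The four vertices close up into a directed triangle that no arc of `M` leaves. -/
theorem IsStrongOn.ncard_le_three_of_isSoleOut (hM : IsStrongOn T M) (hT : IsTournament T)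
    {v₀ v₁ v₂ v₃ : V} (hm₀ : v₀ ∈ M) (hm₁ : v₁ ∈ M) (hm₂ : v₂ ∈ M) (hm₃ : v₃ ∈ M)
    (h₁ : IsSoleOut T M v₁ v₀) (h₂ : IsSoleOut T M v₂ v₁) (h₃ : IsSoleOut T M v₃ v₂) :
    M.ncard ≤ 3 := by
  have hne : v₁ ≠ v₃ := by
    rintro rfl
    exact hT.asymm h₂.1 h₃.1
  have h₁₃ : T v₁ v₃ := hT.arc_of_not_arc hne fun h => hT.ne h₂.1 (h₃.2 v₁ hm₁ h).symm
  obtain rfl : v₃ = v₀ := h₁.2 v₃ hm₃ h₁₃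
  have htriangle : {v₁, v₂, v₃} = M := by
    refine hM _ (by grind) ⟨v₁, mem_insert _ _⟩ ?_
    rintro a (rfl | rfl | rfl) b hb hab
    · exact h₁.2 b hb hab ▸ by simp
    · exact h₂.2 b hb hab ▸ by simp
    · exact h₃.2 b hb hab ▸ by simp
  calc M.ncard = ({v₁, v₂, v₃} : Set V).ncard := by rw [htriangle]
    _ ≤ ({v₂, v₃} : Set V).ncard + 1 := ncard_insert_le _ _
    _ ≤ ({v₃} : Set V).ncard + 1 + 1 := Nat.succ_le_succ (ncard_insert_le _ _)
    _ = 3 := by rw [ncard_singleton]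

/-- `M` has a noncritical vertex of in-degree at least `k`: deleting it leaves `M` strong.
The in-degree is counted before the deletion. -/
def HasNoncriticalVertex (T : V → V → Prop) (M : Set V) (k : ℕ) : Prop :=
  ∃ u ∈ M, k ≤ inDegFrom T M u ∧ IsStrongOn T (M \ {u})

/-- A vertex of `R` with `k - 1` in-neighbours in `R` has `i` as a further in-neighbour, and the
other vertices of `R` still have the detour `o → i` around them. -/
theorem IsDetour.hasNoncriticalVertex {R : Set V} {o i : V} (h : IsDetour T R o i)
    (hT : IsTournament T) (hRM : insert i (insert o R) = M) (hfin : M.Finite)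
    (hcard : 4 ≤ M.ncard) (hk : 2 * k ≤ M.ncard) : HasNoncriticalVertex T M k := by
  have hRfin : R.Finite :=
    hfin.subset <| hRM ▸ (subset_insert o R).trans (subset_insert i _)
  have hoR : o ∉ R := fun ho => hT.1 o (h.2 o ho).1
  have hiR : i ∉ R := fun hi => hT.1 i (h.2 i hi).2
  have hio : i ∉ insert o R := fun hi => hi.elim (hT.ne h.1).symm hiR
  have hRcard : R.ncard + 2 = M.ncard := by
    rw [← hRM, ncard_insert_of_notMem hio (hRfin.insert o), ncard_insert_of_notMem hoR hRfin]
  obtain ⟨u, hu, huk⟩ := hT.exists_le_inDegFrom hRfin (k := k - 1)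
    (nonempty_of_ncard_ne_zero (by omega)) (by omega)
  refine ⟨u, hRM ▸ .inr (.inr hu), ?_, ?_⟩
  · have hsub : insert i {x ∈ R | T x u} ⊆ {x ∈ M | T x u} := by
      rintro x (rfl | hx)
      · exact ⟨hRM ▸ mem_insert x _, (h.2 u hu).2⟩
      · exact ⟨hRM ▸ .inr (.inr hx.1), hx.2⟩
    have hle := ncard_le_ncard hsub (hfin.sep _)
    rw [ncard_insert_of_notMem (fun hi => hiR hi.1) (hRfin.sep _)] at hle
    unfold inDegFrom at huk ⊢
    omega
  · have hrest : (R \ {u}).Nonempty := by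
      apply nonempty_of_ncard_ne_zero
      have := ncard_sdiff_singleton_add_one hu hRfin
      omega
    have hdel : M \ {u} = insert i (insert o (R \ {u})) := by
      rw [insert_sdiff_singleton_comm (hT.ne (h.2 u hu).1).symm,
        insert_sdiff_singleton_comm (hT.ne (h.2 u hu).2), hRM]
    rw [hdel]
    exact IsDetour.isStrongOn ⟨h.1, fun r hr => h.2 r hr.1⟩ hrest

theorem IsGate.hasNoncriticalVertex_or_exists_isSoleOut (hX : IsGate T M X v)
    (hT : IsTournament T) (hM : IsStrongOn T M) (hfin : M.Finite) (hcard : 4 ≤ M.ncard)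
    (hk : 2 * k ≤ M.ncard) (hkX : k ≤ X.ncard) (hv : v ∈ M) (hy : y ∈ M) (hyX : y ∉ X)
    (hyv : y ≠ v) : HasNoncriticalVertex T M k ∨ ∃ y ∈ M, IsSoleOut T M y v := by
  obtain ⟨w, hw, hwX, hwv⟩ := hX.exists_arc_to_gate hM hv hy hyX hyv
  have hSM : insert w (insert v X) ⊆ M := insert_subset hw (insert_subset hv hX.subset)
  by_cases hS : insert w (insert v X) = M
  · refine .inr ⟨w, hw, hwv, fun z hz hwz => ?_⟩
    rcases hS ▸ hz with rfl | rfl | hzX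
    · exact absurd hwz (hT.1 z)
    · rfl
    · exact absurd (hX.eq_of_arc w hw hwX z hzX hwz) (hT.ne hwv)
  · left
    rcases hM.exists_sdiff_singleton_or_exists_isDetour hT hfin
      (hX.isStrongOn_insert_insert hT hM hv hw hwX hwv) (hSM.ssubset_of_ne hS)
      (insert_nonempty _ _) with ⟨u, ⟨hu, huS⟩, hstrong⟩ | ⟨R, o, i, h, hRM⟩
    · simp only [mem_insert_iff, not_or] at huS
      exact ⟨u, hu, hkX.trans (hX.ncard_le_inDegFrom hT hfin hu huS.2.2 huS.2.1), hstrong⟩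
    · exact h.hasNoncriticalVertex hT hRM hfin hcard hk

theorem IsStrongOn.hasNoncriticalVertex_or_isSoleOut_or_isGate (hM : IsStrongOn T M)
    (hT : IsTournament T) (hfin : M.Finite) (hcard : 4 ≤ M.ncard) (hk : 2 * k ≤ M.ncard)
    (hv : v ∈ M) (hvk : k ≤ inDegFrom T M v) :
    HasNoncriticalVertex T M k ∨ (∃ y ∈ M, IsSoleOut T M y v) ∨
      ∃ X, IsGate T M X v ∧ X.ncard < k := by
  by_cases hstrong : IsStrongOn T (M \ {v})
  · exact .inl ⟨v, hv, hvk, hstrong⟩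
  obtain ⟨X, hX, y, hy, hyv, hyX⟩ := exists_isGate_of_not_isStrongOn hstrong
  rcases lt_or_ge X.ncard k with hXk | hkX
  · exact .inr (.inr ⟨X, hX, hXk⟩)
  · refine Or.imp_right .inl ?_
    exact hX.hasNoncriticalVertex_or_exists_isSoleOut hT hM hfin hcard hk hkX hv hy hyX hyv

/-- A small gated set `X` at `y` would contain `v`, the only out-neighbour of `y`, contradicting
that vertices of `X` have in-degree less than `k`. -/
theorem IsSoleOut.hasNoncriticalVertex_or_exists_isSoleOut (h : IsSoleOut T M y v)
    (hT : IsTournament T) (hM : IsStrongOn T M) (hfin : M.Finite) (hcard : 4 ≤ M.ncard)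
    (hk : 2 * k ≤ M.ncard) (hvk : k ≤ inDegFrom T M v) (hy : y ∈ M) :
    HasNoncriticalVertex T M k ∨ ∃ y' ∈ M, IsSoleOut T M y' y := by
  have hyk := h.ncard_le_inDegFrom_add_two hT hfin hy
  rcases hM.hasNoncriticalVertex_or_isSoleOut_or_isGate hT hfin hcard hk hy (by omega) with
    hnc | hsole | ⟨X, hX, hXk⟩
  · exact .inl hnc
  · exact .inr hsole
  · obtain ⟨x, hx, hyx⟩ := hX.exists_arc_gate hM hy
    have hvX : v ∈ X := h.2 x (hX.subset hx) hyx ▸ hx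
    have := hX.inDegFrom_le_ncard hT hfin hvX
    omega

theorem IsSoleOut.hasNoncriticalVertex (h : IsSoleOut T M y v) (hT : IsTournament T)
    (hM : IsStrongOn T M) (hfin : M.Finite) (hcard : 4 ≤ M.ncard) (hk : 2 * k ≤ M.ncard)
    (hv : v ∈ M) (hvk : k ≤ inDegFrom T M v) (hy : y ∈ M) : HasNoncriticalVertex T M k := by
  by_contra hnc
  have hyk := h.ncard_le_inDegFrom_add_two hT hfin hy
  obtain ⟨y', hy', h'⟩ := (h.hasNoncriticalVertex_or_exists_isSoleOut hT hM hfin hcard hk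
    hvk hy).resolve_left hnc
  obtain ⟨y'', hy'', h''⟩ := (h'.hasNoncriticalVertex_or_exists_isSoleOut hT hM hfin hcard hk
    (by omega) hy').resolve_left hnc
  have := hM.ncard_le_three_of_isSoleOut hT hv hy hy' hy'' h h' h''
  omega

theorem IsStrongOn.hasNoncriticalVertex_or_exists_isGate (hM : IsStrongOn T M)
    (hT : IsTournament T) (hfin : M.Finite) (hcard : 4 ≤ M.ncard) (hk : 2 * k ≤ M.ncard)
    (hv : v ∈ M) (hvk : k ≤ inDegFrom T M v) :
    HasNoncriticalVertex T M k ∨ ∃ X, IsGate T M X v ∧ X.ncard < k := by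
  rcases hM.hasNoncriticalVertex_or_isSoleOut_or_isGate hT hfin hcard hk hv hvk with
    hnc | ⟨y, hy, h⟩ | hX
  · exact .inl hnc
  · exact .inl (h.hasNoncriticalVertex hT hM hfin hcard hk hv hvk hy)
  · exact .inr hX

theorem IsStrongOn.outDegTo_pos (hM : IsStrongOn T M) (hfin : M.Finite) (hcard : 1 < M.ncard)
    (hv : v ∈ M) : 0 < outDegTo T v M := by
  obtain ⟨w, hw, hwv⟩ := exists_ne_of_one_lt_ncard hcard v
  obtain ⟨a, rfl, b, hb, hab⟩ := hM.exists_arc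
    (ssubset_iff_exists.2 ⟨singleton_subset_iff.2 hv, w, hw, hwv⟩) (singleton_nonempty v)
  exact (ncard_pos (hfin.sep _)).2 ⟨b, hb.1, hab⟩

theorem IsStrongOn.hasNoncriticalVertex (hM : IsStrongOn T M) (hT : IsTournament T)
    (hfin : M.Finite) (hcard : 4 ≤ M.ncard) (hk : 2 * k ≤ M.ncard) :
    HasNoncriticalVertex T M k := by
  by_contra hnc
  obtain ⟨v, hv, hvk⟩ :=
    hT.exists_le_inDegFrom hfin (nonempty_of_ncard_ne_zero (by omega)) hk
  obtain ⟨v', hv', hne, hvk'⟩ :=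
    hT.exists_ne_le_inDegFrom hfin hk hv (hM.outDegTo_pos hfin (by omega) hv)
  obtain ⟨X, hX, hXk⟩ :=
    (hM.hasNoncriticalVertex_or_exists_isGate hT hfin hcard hk hv hvk).resolve_left hnc
  obtain ⟨X', hX', hXk'⟩ :=
    (hM.hasNoncriticalVertex_or_exists_isGate hT hfin hcard hk hv' hvk').resolve_left hnc
  have hvX' : v ∉ X' := fun h => by
    have := hX'.inDegFrom_le_ncard hT hfin h
    omega
  have hvX : v' ∉ X := fun h => by
    have := hX.inDegFrom_le_ncard hT hfin h
    omega
  exact hne (hX.gate_eq hX' hT hM hv hv' hvX' hvX).symm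

end Deletion

section Hamiltonian

variable {V : Type*} {T : V → V → Prop} {S M : Set V} {n q : ℕ} {v a b o i : V}

theorem zmod_forall_of_add_one [NeZero q] {P : ZMod q → Prop} {i : ZMod q} (hi : P i)
    (hstep : ∀ j, P j → P (j + 1)) (j : ZMod q) : P j := by
  have hadd (n : ℕ) : P (i + n) := by
    induction n with
    | zero => simpa using hi
    | succ n ih => simpa [add_assoc] using hstep _ ih
  simpa using hadd (j - i).val

theorem IsCycle.isStrongOn_range [NeZero q] {c : ZMod q → V} (hc : IsCycle T q c) :
    IsStrongOn T (range c) := by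
  rintro A hA ⟨a, ha⟩ hclosed
  obtain ⟨i, rfl⟩ := hA ha
  exact hA.antisymm <| range_subset_iff.2 <| zmod_forall_of_add_one (P := (c · ∈ A)) ha
    fun j hj => hclosed _ hj _ (mem_range_self _) (hc.2 j)

theorem IsCycle.rotate {c : ZMod q → V} (hc : IsCycle T q c) (k : ZMod q) :
    IsCycle T q fun j => c (j + k) :=
  ⟨hc.1.comp (add_left_injective k), fun j => by simpa [add_right_comm] using hc.2 (j + k)⟩

theorem IsCycle.exists_arc_arc [NeZero q] (hT : IsTournament T) {c : ZMod q → V}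
    (hc : v ∉ range c) (ha : a ∈ range c) (hav : T a v) (hb : b ∈ range c) (hvb : T v b) :
    ∃ j, T (c j) v ∧ T v (c (j + 1)) := by
  by_contra! h
  obtain ⟨i, rfl⟩ := ha
  obtain ⟨j, rfl⟩ := hb
  have hall := zmod_forall_of_add_one (P := fun j => T (c j) v) hav fun j hj =>
    hT.arc_of_not_arc (fun e => hc ⟨_, e⟩) (h j hj)
  exact hT.asymm hvb (hall j)

/-- A directed path `p 0 → p 1 → ⋯ → p n`. Cycles are enlarged by opening them up into paths,
to which vertices are appended by `Fin.snoc`. -/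
def IsDirectedPath (T : V → V → Prop) (p : Fin (n + 1) → V) : Prop :=
  Function.Injective p ∧ ∀ j : Fin n, T (p j.castSucc) (p j.succ)

theorem IsDirectedPath.snoc {p : Fin (n + 1) → V} (hp : IsDirectedPath T p) (hv : v ∉ range p)
    (h : T (p (Fin.last n)) v) :
    IsDirectedPath T (Fin.snoc p v : Fin (n + 2) → V) := by
  refine ⟨Fin.snoc_injective_iff.2 ⟨hp.1, hv⟩, fun j => ?_⟩
  cases j using Fin.lastCases with
  | last => simpa using h
  | cast j => simpa [← Fin.castSucc_succ] using hp.2 j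

theorem isCycle_iff_isDirectedPath {c : Fin (n + 1) → V} :
    IsCycle T (n + 1) c ↔ IsDirectedPath T c ∧ T (c (Fin.last n)) (c 0) := by
  change (_ ∧ ∀ j : Fin (n + 1), T (c j) (c (j + 1))) ↔ _
  rw [Fin.forall_fin_succ']
  simp only [Fin.coeSucc_eq_succ, Fin.last_add_one, IsDirectedPath, and_assoc]
  exact Iff.rfl

/-- `T` has a directed cycle with vertex set `S`. Writing its length as `n + 1` excludes the two-way
infinite paths that `IsCycle T 0` describes, as `ZMod 0 = ℤ`. -/
def IsHamiltonianOn (T : V → V → Prop) (S : Set V) : Prop :=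
  ∃ (n : ℕ) (c : ZMod (n + 1) → V), IsCycle T (n + 1) c ∧ range c = S

theorem IsHamiltonianOn.exists_isCycle (h : IsHamiltonianOn T S) (hq : S.ncard = q) :
    ∃ c : ZMod q → V, IsCycle T q c ∧ range c = S := by
  obtain ⟨n, c, hc, rfl⟩ := h
  have hcard : (range c).ncard = n + 1 := by
    rw [ncard_range_of_injective hc.1, Nat.card_zmod]
  obtain rfl : n + 1 = q := hcard.symm.trans hq
  exact ⟨c, hc, rfl⟩

theorem IsDirectedPath.isHamiltonianOn {p : Fin (n + 1) → V} (hp : IsDirectedPath T p)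
    (h : T (p (Fin.last n)) (p 0)) : IsHamiltonianOn T (range p) :=
  ⟨n, p, isCycle_iff_isDirectedPath.2 ⟨hp, h⟩, rfl⟩

theorem IsHamiltonianOn.insert_of_arc_of_arc (hS : IsHamiltonianOn T S) (hT : IsTournament T)
    (hv : v ∉ S) (ha : a ∈ S) (hav : T a v) (hb : b ∈ S) (hvb : T v b) :
    IsHamiltonianOn T (insert v S) := by
  obtain ⟨n, c, hc, rfl⟩ := hS
  obtain ⟨j, hjv, hvj⟩ := IsCycle.exists_arc_arc hT hv ha hav hb hvb
  let p : Fin (n + 1) → V := fun k : ZMod (n + 1) => c (k + (j + 1))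
  have hp : IsDirectedPath T p := (isCycle_iff_isDirectedPath.1 (hc.rotate (j + 1))).1
  have hrange : range p = range c := (Equiv.addRight (j + 1)).surjective.range_comp c
  have hfirst : p 0 = c (j + 1) := congrArg c (zero_add _)
  have hwrap (j : Fin (n + 1)) : Fin.last n + (j + 1) = j := by
    rw [add_left_comm, Fin.last_add_one, add_zero]
  have hlast : p (Fin.last n) = c j := congrArg c (hwrap j)
  rw [← hrange, ← Fin.range_snoc]
  refine (hp.snoc (hrange ▸ hv) (hlast ▸ hjv)).isHamiltonianOn ?_
  rwa [Fin.snoc_last, Fin.snoc_apply_zero, hfirst]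

theorem IsDirectedPath.isHamiltonianOn_of_isDetour {p : Fin (n + 1) → V}
    (hp : IsDirectedPath T p) (hT : IsTournament T) (h : IsDetour T (range p) o i) :
    IsHamiltonianOn T (insert i (insert o (range p))) := by
  have hop : o ∉ range p := fun ho => hT.1 o (h.2 o ho).1
  have hip : i ∉ range p := fun hi => hT.1 i (h.2 i hi).2
  have hpo := hp.snoc hop (h.2 _ (mem_range_self _)).1
  have hio : i ∉ range (Fin.snoc p o : Fin (n + 2) → V) := by
    rw [Fin.range_snoc]
    exact fun hi => hi.elim (hT.ne h.1).symm hip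
  have hoi : T ((Fin.snoc p o : Fin (n + 2) → V) (Fin.last (n + 1))) i := by
    rw [Fin.snoc_last]
    exact h.1
  rw [← Fin.range_snoc, ← Fin.range_snoc]
  refine (hpo.snoc hio hoi).isHamiltonianOn ?_
  rw [Fin.snoc_last, Fin.snoc_apply_zero, Fin.snoc_apply_zero]
  exact (h.2 _ (mem_range_self 0)).2

theorem IsHamiltonianOn.insert_insert_of_isDetour (hS : IsHamiltonianOn T S)
    (hT : IsTournament T) (h : IsDetour T S o i) :
    IsHamiltonianOn T (insert i (insert o S)) := by
  obtain ⟨n, c, hc, rfl⟩ := hS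
  exact (isCycle_iff_isDirectedPath.1 hc).1.isHamiltonianOn_of_isDetour hT h

theorem IsHamiltonianOn.nonempty (h : IsHamiltonianOn T S) : S.Nonempty := by
  obtain ⟨n, c, -, rfl⟩ := h
  exact range_nonempty c

theorem IsStrongOn.exists_isHamiltonianOn_subset (hM : IsStrongOn T M) (hT : IsTournament T)
    (hnt : M.Nontrivial) : ∃ S ⊆ M, IsHamiltonianOn T S := by
  obtain ⟨v, hv, w, hw, hwv⟩ := hnt
  have hvM : {v} ⊂ M := ssubset_iff_exists.2 ⟨singleton_subset_iff.2 hv, w, hw, hwv.symm⟩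
  rcases hM.exists_ear_or_exists_isDetour hT hvM (singleton_nonempty v) with
    ⟨y, -, ⟨_, rfl, hay⟩, _, rfl, hya⟩ | ⟨o, ho, i, hi, h⟩
  · exact absurd hya (hT.asymm hay)
  · have hpath : IsDirectedPath T fun _ : Fin 1 => v :=
      ⟨fun _ _ _ => Subsingleton.elim (α := Fin 1) _ _, fun j => j.elim0⟩
    rw [← range_const (ι := Fin 1) (c := v)] at h
    refine ⟨_, ?_, hpath.isHamiltonianOn_of_isDetour hT h⟩
    rw [range_const]
    exact insert_subset hi.1 (insert_subset ho.1 hvM.subset)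

/-- Camion's theorem. -/
theorem IsStrongOn.isHamiltonianOn (hM : IsStrongOn T M) (hT : IsTournament T)
    (hfin : M.Finite) (hnt : M.Nontrivial) : IsHamiltonianOn T M := by
  obtain ⟨S₀, hS₀⟩ := hM.exists_isHamiltonianOn_subset hT hnt
  obtain ⟨S, -, hS⟩ := (hfin.finite_subsets.subset fun _ h => h.1 :
    {S | S ⊆ M ∧ IsHamiltonianOn T S}.Finite).exists_le_maximal hS₀
  obtain ⟨hSM, hham⟩ := hS.prop
  suffices S = M from this ▸ hham
  by_contra hne
  rcases hM.exists_ear_or_exists_isDetour hT (hSM.ssubset_of_ne hne) hham.nonempty with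
    ⟨y, hy, ⟨a, ha, hay⟩, b, hb, hyb⟩ | ⟨o, ho, i, hi, h⟩
  · exact hS.not_gt ⟨insert_subset hy.1 hSM, hham.insert_of_arc_of_arc hT hy.2 ha hay hb hyb⟩
      (ssubset_insert hy.2)
  · exact hS.not_gt ⟨insert_subset hi.1 (insert_subset ho.1 hSM),
      hham.insert_insert_of_isDetour hT h⟩
      ((ssubset_insert ho.2).trans_subset (subset_insert i _))

end Hamiltonian

theorem stmt9_general {V : Type*} (T : V → V → Prop) (hT : IsTournament T)
    (m : ℕ) (hm : 4 ≤ m) (c : ZMod m → V) (hc : IsCycle T m c) :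
    ∃ c' : ZMod (m - 1) → V, IsCycle T (m - 1) c' ∧
      Set.range c' ⊆ Set.range c ∧
      ∀ u ∈ Set.range c \ Set.range c', outDegTo T u (Set.range c) ≤ (m - 1) / 2 := by
  have : NeZero m := ⟨by omega⟩
  have hfin : (range c).Finite := finite_range c
  have hcard : (range c).ncard = m := by rw [ncard_range_of_injective hc.1, Nat.card_zmod]
  obtain ⟨u, hu, hin, hstrong⟩ :=
    hc.isStrongOn_range.hasNoncriticalVertex hT hfin (k := m / 2) (by omega) (by omega)
  have hdel : (range c \ {u}).ncard = m - 1 := by rw [ncard_sdiff_singleton_of_mem hu, hcard]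
  have hnt : (range c \ {u}).Nontrivial := one_lt_ncard_iff_nontrivial.1 (by omega)
  obtain ⟨c', hc', hrange⟩ :=
    (hstrong.isHamiltonianOn hT hfin.sdiff hnt).exists_isCycle hdel
  refine ⟨c', hc', hrange ▸ sdiff_subset, fun w hw => ?_⟩
  have hwu : w = u := by_contra fun hne => hw.2 (hrange ▸ ⟨hw.1, hne⟩)
  have := hT.inDegFrom_add_outDegTo hfin hu
  rw [hwu]
  omega

theorem stmt9 {V : Type*} (T : V → V → Prop) (hT : IsTournament T)
    (m : ℕ) (hm : 7 ≤ m) (c : ZMod m → V) (hc : IsCycle T m c) :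
    ∃ c' : ZMod (m - 1) → V, IsCycle T (m - 1) c' ∧
      Set.range c' ⊆ Set.range c ∧
      ∀ u ∈ Set.range c \ Set.range c', outDegTo T u (Set.range c) ≤ m - 4 := by
  obtain ⟨c', hc', hsub, hout⟩ := stmt9_general T hT m (by omega) c hc
  exact ⟨c', hc', hsub, fun u hu => (hout u hu).trans (by omega)⟩
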